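/- arXiv:2604.18577 — 2 statements merged into one kernel-verified Lean document; each statement's English description precedes it below -/
import Mathlib

section
/- Let r ∈ ℕ and let G be an abelian group. Suppose that for each color i (1 ≤ i ≤ q), A_i = a_i + M_i, where a_i ∈ G and M_i ⊆ G is a submonoid (0 ∈ M_i and M_i + M_i ⊆ M_i). Then for every h = (h₁,…,h_q) ∈ ℕ₀^q, (rh)·𝒜 = (r−1)·(Σ_{i=1}^q h_i a_i) + h·𝒜, where the translate is by the group element (r−1)Σ h_i a_i. Consequently 𝒜 is a chromatic (r,1)-approximate group. -/
open Pointwise BigOperators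

/-- The `h`-fold iterated sumset `hA = A + ⋯ + A` (`h` times), with `0A = {0}`. -/
def hfold {G : Type*} [AddCommMonoid G] : ℕ → Set G → Set G
  | 0, _ => {0}
  | n + 1, A => A + hfold n A

/-- The chromatic sumset `h·𝒜 = h₁A₁ + ⋯ + h_qA_q`. -/
def chromSum {G : Type*} [AddCommMonoid G] {q : ℕ} (h : Fin q → ℕ) (A : Fin q → Set G) :
    Set G :=
  ∑ i, hfold (h i) (A i)

/-!
Under Minkowski addition the subsets of `G` form a commutative monoid, in which the `h`-fold sumset
is the multiple `h • A` and a submonoid `M` is idempotent. Hence `n • (a + M) = n • a + M` for every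
`n ≥ 1`, so passing from `h` to `r h` summands only moves the sumset by `(r - 1) h a`.
-/

section IdempotentTranslate

theorem nsmul_eq_self_of_add_self_eq {S : Type*} [AddMonoid S] {m : S} (hm : m + m = m)
    {n : ℕ} (hn : n ≠ 0) : n • m = m :=
  IsIdempotentElem.pow_eq (M := Multiplicative S) hm hn

theorem succ_mul_nsmul_add_of_add_self_eq {S : Type*} [AddCommMonoid S] {m : S} (hm : m + m = m)
    (x : S) (r n : ℕ) : ((r + 1) * n) • (x + m) = r • n • x + n • (x + m) := by
  rcases eq_or_ne n 0 with rfl | hn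
  · simp
  have nsmul_translate {k : ℕ} (hk : k ≠ 0) : k • (x + m) = k • x + m := by
    rw [nsmul_add, nsmul_eq_self_of_add_self_eq hm hk]
  calc ((r + 1) * n) • (x + m)
      = ((r + 1) * n) • x + m := nsmul_translate (mul_ne_zero r.succ_ne_zero hn)
    _ = r • n • x + (n • x + m) := by rw [add_one_mul, add_nsmul, mul_nsmul', add_assoc]
    _ = r • n • x + n • (x + m) := by rw [nsmul_translate hn]

end IdempotentTranslate

section Sumsets

variable {G : Type*} [AddCommMonoid G]

-- Here `n • A` is the iterated Minkowski sum (`Set.NSMul`), not the dilate `{n • x | x ∈ A}`.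
theorem hfold_eq_nsmul (n : ℕ) (A : Set G) : hfold n A = n • A := by
  induction n with
  | zero => rw [zero_nsmul, hfold, Set.singleton_zero]
  | succ n ih => rw [succ_nsmul', ← ih, hfold]

theorem hfold_succ_mul_singleton_add {M : Set G} (hM : M + M = M) (a : G) (r n : ℕ) :
    hfold ((r + 1) * n) ({a} + M) = {r • n • a} + hfold n ({a} + M) := by
  simp only [hfold_eq_nsmul, succ_mul_nsmul_add_of_add_self_eq hM, Set.nsmul_singleton]

theorem chromSum_succ_mul_singleton_add {q : ℕ} {M : Fin q → Set G}
    (hM : ∀ i, M i + M i = M i) (a : Fin q → G) (r : ℕ) (h : Fin q → ℕ) :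
    chromSum (fun i => (r + 1) * h i) (fun i => {a i} + M i) =
      {r • ∑ i, h i • a i} + chromSum h (fun i => {a i} + M i) := by
  simp only [chromSum, hfold_succ_mul_singleton_add (hM _), Finset.sum_add_distrib,
    Set.finsetSum_singleton, Finset.smul_sum]

end Sumsets

theorem stmt8_general {G : Type*} [AddCommMonoid G] {q : ℕ} (r : ℕ) (hr : 0 < r)
    (a : Fin q → G) (M : Fin q → Set G) (hM : ∀ i, M i + M i = M i)
    (A : Fin q → Set G) (hA : ∀ i, A i = {a i} + M i) (h : Fin q → ℕ) :
    chromSum (fun i => r * h i) A = {(r - 1) • ∑ i, h i • a i} + chromSum h A ∧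
    ∃ X : Finset G, X.card ≤ 1 ∧
      chromSum (fun i => r * h i) A ⊆ ↑X + chromSum h A := by
  obtain ⟨s, rfl⟩ := Nat.exists_eq_add_one.mpr hr
  obtain rfl : A = fun i => {a i} + M i := funext hA
  have translate := chromSum_succ_mul_singleton_add hM a s h
  refine ⟨translate, {s • ∑ i, h i • a i}, (Finset.card_singleton _).le, ?_⟩
  rw [Finset.coe_singleton, translate]

/-- Translated submonoids: if `Aᵢ = aᵢ + Mᵢ` with `Mᵢ` a submonoid, then
`(rh)·𝒜 = (r−1)(∑ᵢ hᵢaᵢ) + h·𝒜`; consequently `𝒜` is a chromatic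
`(r,1)`-approximate group. -/
theorem stmt8 {G : Type*} [AddCommGroup G] {q : ℕ} (r : ℕ) (hr : 0 < r)
    (a : Fin q → G) (M : Fin q → Set G)
    (hM0 : ∀ i, (0 : G) ∈ M i) (hMadd : ∀ i, M i + M i ⊆ M i)
    (A : Fin q → Set G) (hA : ∀ i, A i = {a i} + M i) (h : Fin q → ℕ) :
    chromSum (fun i => r * h i) A = {(r - 1) • ∑ i, h i • a i} + chromSum h A ∧
    ∃ X : Finset G, X.card ≤ 1 ∧
      chromSum (fun i => r * h i) A ⊆ ↑X + chromSum h A :=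
  stmt8_general r hr a M (fun i => (hMadd i).antisymm (Set.subset_add_left _ (hM0 i))) A hA h
end

section
/- Let 𝒜 = (A₁,…,A_q) be a tuple of subsets of an abelian group G, where each A_i is a finite union of bounded or unbounded generalized arithmetic progressions. After refining each bounded linear set into finitely many singleton unbounded linear sets, let s_i denote the total number of resulting unbounded linear pieces in A_i. Then for every r ∈ ℕ, 𝒜 is a chromatic asymptotic (r,ℓ)-approximate group with ℓ = ∏_{i=1}^q C((r+1)(s_i−1), s_i−1). -/
open Pointwise BigOperators

/-- `𝒜` is a chromatic asymptotic `(r,ℓ)`-approximate group: there is a threshold vector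
`h₀` such that for all `h ⪰ h₀` there is `X_h ⊆ G` with `|X_h| ≤ ℓ` and
`(rh)·𝒜 ⊆ X_h + h·𝒜`. -/
def IsCAAG {G : Type*} [AddCommGroup G] {q : ℕ} (A : Fin q → Set G) (r ℓ : ℕ) : Prop :=
  ∃ h₀ : Fin q → ℕ, ∀ h : Fin q → ℕ, (∀ i, h₀ i ≤ h i) →
    ∃ X : Finset G, X.card ≤ ℓ ∧
      chromSum (fun i => r * h i) A ⊆ ↑X + chromSum h A

/-- An unbounded linear set `P(a; b₁,…,b_d) = {a + n₁b₁ + ⋯ + n_d b_d : nⱼ ∈ ℕ₀}`. -/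
def IsUnboundedLinear {G : Type*} [AddCommMonoid G] (S : Set G) : Prop :=
  ∃ (d : ℕ) (a : G) (b : Fin d → G),
    S = {x | ∃ n : Fin d → ℕ, x = a + ∑ j, n j • b j}

/-- A bounded linear set `P_{m₁,…,m_d}(a; b₁,…,b_d) = {a + n₁b₁ + ⋯ + n_d b_d : 0 ≤ nⱼ ≤ mⱼ}`. -/
def IsBoundedLinear {G : Type*} [AddCommMonoid G] (S : Set G) : Prop :=
  ∃ (d : ℕ) (a : G) (b : Fin d → G) (m : Fin d → ℕ),
    S = {x | ∃ n : Fin d → ℕ, (∀ j, n j ≤ m j) ∧ x = a + ∑ j, n j • b j}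

/-!
An unbounded linear set is a coset `a + M` of a submonoid `M`, and `n(a + M) = n • a + M` for
`n ≠ 0`. So if `A` is the union of the cosets `aⱼ + Mⱼ`, then `hA` is the union over all
`x ∈ ℕ^s` with `∑ xⱼ = h` of the sets `∑ xⱼ(aⱼ + Mⱼ)`, and the set given by `x` lies in the
translate by `∑ (xⱼ - eⱼ) • aⱼ` of the set given by `e` as soon as every zero of `e` is a zero
of `x`. It remains to subtract from each `x` with `∑ xⱼ = r * h` an `e` with `∑ eⱼ = h` so that
few differences occur. For all coordinates but one, take `xⱼ - eⱼ = t * yⱼ` to be the largest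
multiple of `t` that is `< xⱼ` (or `0` if `xⱼ = 0`), where the step `t` is slightly less than
`h / (s - 1)`. This leaves `h - ∑ eⱼ > 0` for the last coordinate of `e`, and forces
`∑ yⱼ ≤ r * (s - 1)`; there are `C((r + 1)(s - 1), s - 1)` such vectors `y`.
-/

/-- `A` is an asymptotic `(r,ℓ)`-approximate group: for all large `h`, the sumset `(rh)A` is
covered by at most `ℓ` translates of `hA`. This is the case `q = 1` of `IsCAAG`. -/
def IsAsymptoticApproxGroup {G : Type*} [AddCommGroup G] (A : Set G) (r ℓ : ℕ) : Prop :=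
  ∃ h₀ : ℕ, ∀ h ≥ h₀, ∃ X : Finset G, X.card ≤ ℓ ∧ hfold (r * h) A ⊆ ↑X + hfold h A

section Sumsets

variable {G ι : Type*} [AddCommMonoid G]

lemma sum_const_eq_hfold (t : Finset ι) (A : Set G) : ∑ _i ∈ t, A = hfold t.card A := by
  induction t using Finset.cons_induction with
  | empty => rfl
  | cons i t hi ih => rw [Finset.sum_cons, Finset.card_cons, ih, hfold]

lemma hfold_add (m n : ℕ) (A : Set G) : hfold (m + n) A = hfold m A + hfold n A := by
  induction m with
  | zero => rw [Nat.zero_add, hfold, Set.singleton_zero, zero_add]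
  | succ m ih => rw [Nat.succ_add, hfold, hfold, ih, add_assoc]

lemma hfold_sum (t : Finset ι) (x : ι → ℕ) (A : Set G) :
    hfold (∑ j ∈ t, x j) A = ∑ j ∈ t, hfold (x j) A := by
  induction t using Finset.cons_induction with
  | empty => rfl
  | cons j t hj ih => rw [Finset.sum_cons, Finset.sum_cons, hfold_add, ih]

lemma hfold_mono {A B : Set G} (hAB : A ⊆ B) (n : ℕ) : hfold n A ⊆ hfold n B := by
  induction n with
  | zero => exact subset_rfl
  | succ n ih => exact Set.add_subset_add hAB ih

lemma hfold_empty {n : ℕ} (hn : n ≠ 0) : hfold n (∅ : Set G) = ∅ := by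
  cases n with
  | zero => contradiction
  | succ n => exact Set.empty_add

lemma hfold_iUnion [Fintype ι] [DecidableEq ι] (B : ι → Set G) (h : ℕ) :
    hfold h (⋃ j, B j) = ⋃ x ∈ Finset.piAntidiag Finset.univ h, ∑ j, hfold (x j) (B j) := by
  refine Set.Subset.antisymm (fun z hz => ?_) (Set.iUnion₂_subset fun x hx => ?_)
  · have hz' : z ∈ ∑ _i : Fin h, ⋃ j, B j := by
      rwa [sum_const_eq_hfold, Finset.card_univ, Fintype.card_fin]
    obtain ⟨g, hg, rfl⟩ := (Set.mem_fintype_sum _ _).1 hz'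
    choose c hc using fun i => Set.mem_iUnion.1 (hg i)
    refine Set.mem_biUnion (x := fun j => (Finset.univ.filter (c · = j)).card) ?_ ?_
    · simp [Finset.sum_card_fiberwise_eq_card_filter]
    · rw [← Finset.sum_fiberwise Finset.univ c g]
      refine Set.finsetSum_mem_finsetSum _ _ _ fun j _ => ?_
      rw [← sum_const_eq_hfold]
      refine Set.finsetSum_mem_finsetSum _ _ _ fun i hi => ?_
      exact (Finset.mem_filter.1 hi).2 ▸ hc i
  · rw [← (Finset.mem_piAntidiag.1 hx).1, hfold_sum]
    exact Set.finsetSum_subset_finsetSum _ _ _ fun j _ => hfold_mono (Set.subset_iUnion B j) _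

lemma card_sum_le_prod_card [DecidableEq G] (t : Finset ι) (X : ι → Finset G) :
    (∑ i ∈ t, X i).card ≤ ∏ i ∈ t, (X i).card := by
  induction t using Finset.cons_induction with
  | empty => simp
  | cons i t hi ih =>
    rw [Finset.sum_cons, Finset.prod_cons]
    exact Finset.card_add_le.trans (Nat.mul_le_mul_left _ ih)

lemma sum_vadd_eq_vadd_sum (t : Finset ι) (c : ι → G) (S : ι → Set G) :
    ∑ j ∈ t, (c j +ᵥ S j) = (∑ j ∈ t, c j) +ᵥ ∑ j ∈ t, S j := by
  simp only [← Set.singleton_vadd, vadd_eq_add, Finset.sum_add_distrib,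
    Set.finsetSum_singleton]

lemma hfold_vadd_of_ne_zero (a : G) (M : AddSubmonoid G) {n : ℕ} (hn : n ≠ 0) :
    hfold n (a +ᵥ (M : Set G)) = n • a +ᵥ (M : Set G) := by
  induction n, Nat.one_le_iff_ne_zero.2 hn using Nat.le_induction with
  | base => simp [hfold]
  | succ n hn' ih =>
    rw [hfold, ih (Nat.one_le_iff_ne_zero.1 hn'), vadd_add_vadd_comm, AddSubmonoid.coe_add_self_eq,
      succ_nsmul']

lemma IsUnboundedLinear.exists_eq_vadd {S : Set G} (hS : IsUnboundedLinear S) :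
    ∃ (a : G) (M : AddSubmonoid G), S = a +ᵥ (M : Set G) := by
  obtain ⟨d, a, b, rfl⟩ := hS
  refine ⟨a, AddSubmonoid.closure (Set.range b), Set.ext fun x => ?_⟩
  simp [Set.mem_vadd_set, AddSubmonoid.mem_closure_range_iff_of_fintype, eq_comm]

end Sumsets

section CosetTranslates

variable {G ι : Type*} [AddCommGroup G]

lemma hfold_vadd_subset (a : G) (M : AddSubmonoid G) {m n : ℕ} (hmn : n = 0 → m = 0) :
    hfold m (a +ᵥ (M : Set G)) ⊆ ((m : ℤ) - n) • a +ᵥ hfold n (a +ᵥ (M : Set G)) := by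
  rcases eq_or_ne n 0 with rfl | hn
  · simp [hmn rfl]
  have hcoset : ((m : ℤ) - n) • a +ᵥ hfold n (a +ᵥ (M : Set G)) = m • a +ᵥ (M : Set G) := by
    rw [hfold_vadd_of_ne_zero a M hn, vadd_vadd, sub_smul, natCast_zsmul, natCast_zsmul,
      sub_add_cancel]
  rw [hcoset]
  rcases eq_or_ne m 0 with rfl | hm
  · simp [hfold]
  · rw [hfold_vadd_of_ne_zero a M hm]

lemma sum_hfold_vadd_subset (t : Finset ι) (a : ι → G) (M : ι → AddSubmonoid G) {x e : ι → ℕ}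
    (hxe : ∀ j ∈ t, e j = 0 → x j = 0) :
    ∑ j ∈ t, hfold (x j) (a j +ᵥ (M j : Set G)) ⊆
      (∑ j ∈ t, ((x j : ℤ) - e j) • a j) +ᵥ ∑ j ∈ t, hfold (e j) (a j +ᵥ (M j : Set G)) :=
  (Set.finsetSum_subset_finsetSum _ _ _ fun j hj => hfold_vadd_subset (a j) (M j) (hxe j hj)).trans
    (sum_vadd_eq_vadd_sum t _ _).subset

end CosetTranslates

section Rounding

variable {ι : Type*}

lemma eq_of_sum_eq_of_forall_ne [Fintype ι] {R : Type*} [AddCancelCommMonoid R] {f g : ι → R}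
    (l : ι) (hne : ∀ j ≠ l, f j = g j) (hsum : ∑ j, f j = ∑ j, g j) : f = g := by
  classical
  rw [← Finset.add_sum_erase _ f (Finset.mem_univ l),
    ← Finset.add_sum_erase _ g (Finset.mem_univ l),
    Finset.sum_congr rfl fun j hj => hne j (Finset.ne_of_mem_erase hj)] at hsum
  funext j
  rcases eq_or_ne j l with rfl | hj
  · exact add_right_cancel hsum
  · exact hne j hj

variable [DecidableEq ι]

lemma card_piAntidiag_nat_eq_choose (t : Finset ι) (n : ℕ) :
    (Finset.piAntidiag t n).card = (t.card + n - 1).choose n := by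
  rw [← Finset.card_finsuppAntidiag_nat_eq_choose]
  simp [Finset.finsuppAntidiag]

variable [Fintype ι]

lemma sum_update_sub_sum_erase (f : ι → ℕ) (l : ι) {n : ℕ}
    (hn : ∑ j ∈ Finset.univ.erase l, f j ≤ n) :
    ∑ j, Function.update f l (n - ∑ j ∈ Finset.univ.erase l, f j) j = n := by
  rw [Finset.sum_update_of_mem (Finset.mem_univ l), Finset.sdiff_singleton_eq_erase,
    Nat.sub_add_cancel hn]

lemma exists_eq_mul_add_le (n : ℕ) {t : ℕ} (ht : 0 < t) :
    ∃ y e, n = t * y + e ∧ e ≤ t ∧ (e = 0 → n = 0) := by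
  have hdiv := Nat.div_add_mod (n - 1) t
  have hmod := Nat.mod_lt (n - 1) ht
  exact ⟨(n - 1) / t, n - t * ((n - 1) / t), by omega, by omega, by omega⟩

lemma exists_piAntidiag_round (l : ι) {t h n N : ℕ} (hth : (Fintype.card ι - 1) * t < h)
    (hnt : n < (N + 1) * t) {x : ι → ℕ} (hx : ∑ j, x j = n) :
    ∃ y ∈ Finset.piAntidiag Finset.univ N, ∃ e ∈ Finset.piAntidiag Finset.univ h,
      (∀ j, e j = 0 → x j = 0) ∧ ∀ j ≠ l, x j = t * y j + e j := by
  have ht : 0 < t := Nat.pos_of_mul_pos_left (Nat.zero_lt_of_lt hnt)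
  choose y e hxye he_le he_zero using fun j => exists_eq_mul_add_le (x j) ht
  have he_sum : ∑ j ∈ Finset.univ.erase l, e j < h := by
    refine lt_of_le_of_lt ?_ hth
    simpa using Finset.sum_le_card_nsmul (Finset.univ.erase l) e t fun j _ => he_le j
  have hy_sum : ∑ j ∈ Finset.univ.erase l, y j ≤ N := by
    have hle : (∑ j ∈ Finset.univ.erase l, y j) * t ≤ n := calc
      _ = ∑ j ∈ Finset.univ.erase l, t * y j := by rw [mul_comm, Finset.mul_sum]
      _ ≤ ∑ j ∈ Finset.univ.erase l, x j :=
        Finset.sum_le_sum fun j _ => hxye j ▸ Nat.le_add_right _ _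
      _ ≤ n := hx ▸ Finset.sum_le_sum_of_subset (Finset.erase_subset _ _)
    exact Nat.lt_succ_iff.1 (Nat.lt_of_mul_lt_mul_right (hle.trans_lt hnt))
  refine ⟨Function.update y l (N - ∑ j ∈ Finset.univ.erase l, y j), ?_,
    Function.update e l (h - ∑ j ∈ Finset.univ.erase l, e j), ?_, fun j hj => ?_,
    fun j hj => ?_⟩
  · simpa using sum_update_sub_sum_erase y l hy_sum
  · simpa using sum_update_sub_sum_erase e l he_sum.le
  · rcases eq_or_ne j l with rfl | hjl
    · rw [Function.update_self] at hj
      omega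
    · exact he_zero j (by rwa [Function.update_of_ne hjl] at hj)
  · simpa [Function.update_of_ne hj] using hxye j

-- For `d > 0` the largest step with `d * t < h` is about `h / d`, which exceeds
-- `r * h / (r * d + 1)` once `h` is large; for `d = 0` the step is only bounded below.
lemma exists_mul_lt_and_lt_mul {r d h : ℕ} (hh : d * (r * d + 1) < h) :
    ∃ t, d * t < h ∧ r * h < (r * d + 1) * t := by
  rcases Nat.eq_zero_or_pos d with rfl | hd
  · exact ⟨r * h + 1, by omega, by omega⟩
  have hstep : r * d + 1 ≤ (h - 1) / d := by
    rw [Nat.le_div_iff_mul_le hd, mul_comm]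
    omega
  have hle : d * ((h - 1) / d) ≤ h - 1 := Nat.mul_div_le _ _
  have hlt : h - 1 < d * ((h - 1) / d + 1) := Nat.lt_mul_div_succ _ hd
  refine ⟨(h - 1) / d, by omega, ?_⟩
  calc r * h ≤ r * (d * ((h - 1) / d + 1)) := Nat.mul_le_mul_left _ (by omega)
    _ = r * d * ((h - 1) / d) + r * d := by ring
    _ < r * d * ((h - 1) / d) + (h - 1) / d := by omega
    _ = (r * d + 1) * ((h - 1) / d) := by ring

lemma exists_finset_rounding [Nonempty ι] {r h : ℕ}
    (hh : (Fintype.card ι - 1) * (r * (Fintype.card ι - 1) + 1) < h) :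
    ∃ V : Finset (ι → ℤ),
      V.card ≤ ((r + 1) * (Fintype.card ι - 1)).choose (Fintype.card ι - 1) ∧
      ∀ x ∈ Finset.piAntidiag (Finset.univ : Finset ι) (r * h),
        ∃ e ∈ Finset.piAntidiag Finset.univ h,
          (∀ j, e j = 0 → x j = 0) ∧ (fun j => (x j : ℤ) - e j) ∈ V := by
  obtain ⟨t, hth, hrt⟩ := exists_mul_lt_and_lt_mul hh
  let l : ι := Classical.arbitrary ι
  set d := Fintype.card ι - 1
  let shift : (ι → ℕ) → ι → ℤ := fun y j =>
    t * y j + (Pi.single l (r * h - h - t * (r * d)) : ι → ℤ) j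
  refine ⟨(Finset.piAntidiag Finset.univ (r * d)).image shift, ?_, fun x hx => ?_⟩
  · have hcard : Fintype.card ι + r * d - 1 = (r + 1) * d := by
      have := Fintype.card_pos (α := ι)
      rw [add_one_mul]
      omega
    refine Finset.card_image_le.trans_eq ?_
    rw [card_piAntidiag_nat_eq_choose, Finset.card_univ, hcard]
    exact Nat.choose_symm_of_eq_add (by ring)
  · have hx_sum : ∑ j, x j = r * h := (Finset.mem_piAntidiag.1 hx).1
    obtain ⟨y, hy, e, he, he_zero, hxye⟩ := exists_piAntidiag_round l hth hrt hx_sum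
    refine ⟨e, he, he_zero, Finset.mem_image.2 ⟨y, hy, ?_⟩⟩
    refine eq_of_sum_eq_of_forall_ne l (fun j hj => by simp [shift, hj, hxye j hj]) ?_
    have hx_sum' : ∑ j, (x j : ℤ) = r * h := mod_cast hx_sum
    have hy_sum : ∑ j, (y j : ℤ) = r * d := mod_cast (Finset.mem_piAntidiag.1 hy).1
    have he_sum : ∑ j, (e j : ℤ) = h := mod_cast (Finset.mem_piAntidiag.1 he).1
    calc ∑ j, shift y j = t * (r * d) + (r * h - h - t * (r * d)) := by
          rw [Finset.sum_add_distrib, ← Finset.mul_sum, hy_sum, Fintype.sum_pi_single']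
      _ = ∑ j, ((x j : ℤ) - e j) := by
          rw [Finset.sum_sub_distrib, hx_sum', he_sum, add_sub_cancel]

end Rounding

theorem isAsymptoticApproxGroup_iUnion_vadd {G ι : Type*} [AddCommGroup G] [Fintype ι]
    (a : ι → G) (M : ι → AddSubmonoid G) {r : ℕ} (hr : 0 < r) :
    IsAsymptoticApproxGroup (⋃ j, a j +ᵥ (M j : Set G)) r
      (((r + 1) * (Fintype.card ι - 1)).choose (Fintype.card ι - 1)) := by
  classical
  cases isEmpty_or_nonempty ι with
  | inl hι =>
    refine ⟨1, fun h hh => ⟨∅, by simp, ?_⟩⟩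
    rw [Set.iUnion_of_empty, hfold_empty (Nat.mul_pos hr hh).ne']
    exact Set.empty_subset _
  | inr hι =>
    refine ⟨(Fintype.card ι - 1) * (r * (Fintype.card ι - 1) + 1) + 1, fun h hh => ?_⟩
    obtain ⟨V, hV_card, hV⟩ := exists_finset_rounding (Nat.lt_of_succ_le hh)
    refine ⟨V.image fun v => ∑ j, v j • a j, Finset.card_image_le.trans hV_card, ?_⟩
    rw [hfold_iUnion]
    refine Set.iUnion₂_subset fun x hx => ?_
    obtain ⟨e, he, he_zero, hxe⟩ := hV x hx
    calc ∑ j, hfold (x j) (a j +ᵥ (M j : Set G))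
        ⊆ (∑ j, ((x j : ℤ) - e j) • a j) +ᵥ ∑ j, hfold (e j) (a j +ᵥ (M j : Set G)) :=
          sum_hfold_vadd_subset _ a M fun j _ => he_zero j
      _ ⊆ (∑ j, ((x j : ℤ) - e j) • a j) +ᵥ hfold h (⋃ j, a j +ᵥ (M j : Set G)) := by
          rw [hfold_iUnion]
          exact Set.vadd_set_mono (Set.subset_iUnion₂_of_subset e he subset_rfl)
      _ ⊆ _ := Set.vadd_set_subset_vadd
          (Finset.mem_coe.2 (Finset.mem_image.2 ⟨_, hxe, rfl⟩))

theorem isCAAG_of_isAsymptoticApproxGroup {G : Type*} [AddCommGroup G] {q : ℕ}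
    {A : Fin q → Set G} {r : ℕ} {ℓ : Fin q → ℕ} (hA : ∀ i, IsAsymptoticApproxGroup (A i) r (ℓ i)) :
    IsCAAG A r (∏ i, ℓ i) := by
  classical
  choose h₀ hcover using hA
  refine ⟨h₀, fun h hh => ?_⟩
  choose X hX_card hX using fun i => hcover i (h i) (hh i)
  refine ⟨∑ i, X i, ?_, ?_⟩
  · exact (card_sum_le_prod_card _ X).trans (Finset.prod_le_prod' fun i _ => hX_card i)
  · rw [Finset.coe_sum, chromSum, chromSum, ← Finset.sum_add_distrib]
    exact Set.finsetSum_subset_finsetSum _ _ _ fun i _ => hX i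

theorem stmt14_general {G : Type*} [AddCommGroup G] {q : ℕ} (A : Fin q → Set G) (s : Fin q → ℕ)
    (hA : ∀ i, ∃ Q : Fin (s i) → Set G,
      (∀ j, ∃ (a : G) (M : AddSubmonoid G), Q j = a +ᵥ (M : Set G)) ∧ A i = ⋃ j, Q j)
    (r : ℕ) (hr : 0 < r) :
    IsCAAG A r (∏ i, ((r + 1) * (s i - 1)).choose (s i - 1)) := by
  refine isCAAG_of_isAsymptoticApproxGroup fun i => ?_
  obtain ⟨Q, hQ, hAQ⟩ := hA i
  choose a M hQM using hQ
  simpa [hAQ, hQM] using isAsymptoticApproxGroup_iUnion_vadd a M hr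

/-- Tuples of finite unions of bounded or unbounded generalized arithmetic progressions:
if each `Aᵢ` is a finite union of bounded or unbounded linear sets and, after refining
each bounded linear piece into finitely many singleton unbounded linear sets, `Aᵢ` is a
union of `sᵢ` unbounded linear sets, then `𝒜` is a chromatic asymptotic
`(r, ∏ᵢ C((r+1)(sᵢ−1), sᵢ−1))`-approximate group. -/
theorem stmt14 {G : Type*} [AddCommGroup G] {q : ℕ} (A : Fin q → Set G) (s : Fin q → ℕ)
    (hdecomp : ∀ i, ∃ (n : ℕ) (P : Fin n → Set G),
      (∀ j, IsUnboundedLinear (P j) ∨ IsBoundedLinear (P j)) ∧ A i = ⋃ j, P j)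
    (hrefine : ∀ i, ∃ Q : Fin (s i) → Set G,
      (∀ j, IsUnboundedLinear (Q j)) ∧ A i = ⋃ j, Q j)
    (r : ℕ) (hr : 0 < r) :
    IsCAAG A r (∏ i, ((r + 1) * (s i - 1)).choose (s i - 1)) :=
  stmt14_general A s (fun i => (hrefine i).imp fun _ hQ =>
    hQ.imp_left fun hlin j => (hlin j).exists_eq_vadd) r hr
end
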